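/- arXiv:1803.09085 — 2 statements merged into one kernel-verified Lean document; each statement's English description precedes it below -/
import Mathlib

section
/- Let n ∈ ℕ, let k be a positive integer, and let b > 0, c > 0, A > 0 be real numbers. Then ∫_c^∞ y^{−n} (y−c)^{k−1} exp(−(y−c)/b − A/y) dy = Σ_{j=0}^{k−1} C(k−1, j) (−c)^{k−1−j} e^{c/b} b^{j−n+1} Γ(j−n+1, c/b; A/b), where C(k−1, j) is the binomial coefficient and Γ(s, x; B) := ∫_x^∞ t^{s−1} exp(−t − B/t) dt is the extended incomplete Gamma function. -/
open MeasureTheory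

/-- The extended incomplete Gamma function
`Γ(s, x; B) = ∫ₓ^∞ t ^ (s - 1) exp (-t - B/t) dt`. -/
noncomputable def extGamma (s x B : ℝ) : ℝ :=
  ∫ t in Set.Ioi x, t ^ (s - 1) * Real.exp (-t - B / t)

lemma extGamma_integrableOn (p x B : ℝ) (hx : 0 < x) (hB : 0 < B) :
    IntegrableOn (fun t : ℝ => t ^ p * Real.exp (-t - B / t)) (Set.Ioi x) := by
  refine integrable_of_isBigO_exp_neg (b := 1 / 2) (by norm_num) ?_ ?_
  · intro t ht
    have h0 : t ≠ 0 := (lt_of_lt_of_le hx ht).ne'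
    apply ContinuousAt.continuousWithinAt
    have h1 : ContinuousAt (fun t : ℝ => t ^ p) t := Real.continuousAt_rpow_const _ _ (Or.inl h0)
    have h2 : ContinuousAt (fun t : ℝ => B / t) t := continuousAt_const.div continuousAt_id h0
    exact h1.mul (Real.continuous_exp.continuousAt.comp (continuousAt_id.neg.sub h2))
  · have h := (isLittleO_rpow_exp_pos_mul_atTop p (b := 1 / 2) (by norm_num)).isBigO
    have h2 : (fun t : ℝ => Real.exp (-t - B / t)) =O[Filter.atTop] fun t => Real.exp (-t) := by
      apply Asymptotics.IsBigO.of_bound 1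
      filter_upwards [Filter.eventually_gt_atTop 0] with t ht
      have : 0 < B / t := by positivity
      rw [Real.norm_eq_abs, Real.norm_eq_abs, Real.abs_exp, Real.abs_exp, one_mul]
      exact Real.exp_le_exp.mpr (by linarith)
    refine (h.mul h2).congr_right fun t => ?_
    rw [← Real.exp_add]
    congr 1
    ring

/-- Binomial expansion and the substitution `z = y / b` reduce the key integral of the
paper's Theorem 1 to extended incomplete Gamma functions:
`∫_c^∞ y⁻ⁿ (y-c)^(k-1) exp (-(y-c)/b - A/y) dy
  = ∑_{j=0}^{k-1} C(k-1, j) (-c)^(k-1-j) e^(c/b) b^(j-n+1) Γ(j-n+1, c/b; A/b)`. -/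
theorem integral_eq_sum_extGamma (n k : ℕ) (hk : 0 < k) (b c A : ℝ)
    (hb : 0 < b) (hc : 0 < c) (hA : 0 < A) :
    (∫ y in Set.Ioi c, y ^ (-(n : ℤ)) * (y - c) ^ (k - 1)
        * Real.exp (-(y - c) / b - A / y))
      = ∑ j ∈ Finset.range k, ((k - 1).choose j : ℝ) * (-c) ^ (k - 1 - j)
          * Real.exp (c / b) * b ^ ((j : ℤ) - n + 1)
          * extGamma ((j : ℝ) - n + 1) (c / b) (A / b) := by
  have hx : 0 < c / b := by positivity
  have hB : 0 < A / b := by positivity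
  have hbc : b * (c / b) = c := by field_simp
  conv_lhs => rw [← hbc]
  rw [← integral_comp_mul_left_Ioi' _ (c / b) hb, hbc]
  have key : ∀ t ∈ Set.Ioi (c / b),
      (b * t) ^ (-(n : ℤ)) * (b * t - c) ^ (k - 1) * Real.exp (-(b * t - c) / b - A / (b * t))
      = ∑ j ∈ Finset.range k, (((k - 1).choose j : ℝ) * (-c) ^ (k - 1 - j)
          * Real.exp (c / b) * b ^ ((j : ℤ) - n)) *
          (t ^ ((j : ℝ) - n + 1 - 1) * Real.exp (-t - A / b / t)) := by
    intro t ht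
    have ht0 : 0 < t := hx.trans ht
    have he : Real.exp (-(b * t - c) / b - A / (b * t))
        = Real.exp (c / b) * Real.exp (-t - A / b / t) := by
      rw [← Real.exp_add]
      congr 1
      field_simp
      ring
    rw [he, sub_eq_add_neg (b * t) c, add_pow, Nat.sub_add_cancel hk, Finset.mul_sum,
      Finset.sum_mul]
    refine Finset.sum_congr rfl fun j _ => ?_
    have hr : t ^ ((j : ℝ) - n + 1 - 1) = t ^ ((j : ℤ) - n) := by
      rw [← Real.rpow_intCast]
      congr 1
      push_cast
      ring
    have hz : (b * t) ^ (-(n : ℤ)) * (b * t) ^ j = b ^ ((j : ℤ) - n) * t ^ ((j : ℤ) - n) := by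
      rw [← mul_zpow, sub_eq_neg_add, zpow_add₀ (by positivity), zpow_natCast]
    rw [hr]
    linear_combination ((-c) ^ (k - 1 - j) * ((k - 1).choose j : ℝ) * Real.exp (c / b)
      * Real.exp (-t - A / b / t)) * hz
  rw [setIntegral_congr_fun measurableSet_Ioi key, integral_finset_sum, smul_eq_mul,
    Finset.mul_sum]
  · refine Finset.sum_congr rfl fun j _ => ?_
    rw [integral_const_mul, zpow_add_one₀ hb.ne', extGamma]
    ring
  · intro j _
    exact (extGamma_integrableOn _ _ _ hx hB).const_mul _
end

section
/- Let N and L be positive integers, let c > 0, and for each i ∈ {1, …, L} let a_i be a positive integer, b_i > 0, and let Ξ(i, k) ∈ ℝ for 1 ≤ k ≤ a_i. Define f : [c, ∞) → ℝ by f(y) = Σ_{i=1}^{L} Σ_{k=1}^{a_i} Ξ(i, k) (y−c)^{k−1} exp(−(y−c)/b_i) / (b_i^k (k−1)!), and assume ∫_c^∞ f(y) dy = 1. Then for every x > 0, ∫_c^∞ [γ(N, N x/(2y))/(N−1)!] f(y) dy = 1 − Σ_{n=0}^{N−1} Σ_{i=1}^{L} Σ_{k=1}^{a_i} Σ_{j=0}^{k−1}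 [(−c)^{k−1−j} Ξ(i, k) / (n! b_i^{k+n−j−1} (k−1)!)] C(k−1, j) (N x/2)^n e^{c/b_i} Γ(−n+j+1, c/b_i; N x/(2 b_i)), where γ(s, t) = ∫₀^t u^{s−1} e^{−u} du is the lower incomplete Gamma function, C(k−1, j) is the binomial coefficient, and Γ(s, x; B) := ∫_x^∞ t^{s−1} exp(−t − B/t) dt is the extended incomplete Gamma function. -/
open MeasureTheory

/-- The lower incomplete Gamma function at a positive integer shape,
`γ(N, t) = ∫₀ᵗ u ^ (N - 1) exp (-u) du`. -/
noncomputable def lowGamma (N : ℕ) (t : ℝ) : ℝ :=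
  ∫ u in (0:ℝ)..t, u ^ (N - 1) * Real.exp (-u)

lemma lowGamma_succ_eq (M : ℕ) (t : ℝ) :
    lowGamma (M + 1) t / (Nat.factorial M : ℝ)
      = 1 - ∑ n ∈ Finset.range (M + 1), t ^ n / (Nat.factorial n : ℝ) * Real.exp (-t) := by
  have hd : ∀ M : ℕ, ∀ u : ℝ, HasDerivAt
      (fun t : ℝ => -∑ n ∈ Finset.range (M + 1), t ^ n / (Nat.factorial n : ℝ) * Real.exp (-t))
      (u ^ M * Real.exp (-u) / (Nat.factorial M : ℝ)) u := by
    intro M u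
    have he : HasDerivAt (fun t : ℝ => Real.exp (-t)) (-Real.exp (-u)) u := by
      simpa using (hasDerivAt_id u).neg.exp
    induction M with
    | zero =>
      refine (he.neg.congr_deriv ?_).congr_of_eventuallyEq (Filter.Eventually.of_forall ?_)
      · simp
      · intro t
        simp
    | succ M ih =>
      have h1 : HasDerivAt (fun t : ℝ => t ^ (M + 1) / (Nat.factorial (M + 1) : ℝ) * Real.exp (-t))
          (u ^ M / (Nat.factorial M : ℝ) * Real.exp (-u)
            + u ^ (M + 1) / (Nat.factorial (M + 1) : ℝ) * (-Real.exp (-u))) u := by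
        have h2 := ((hasDerivAt_pow (M + 1) u).div_const (Nat.factorial (M + 1) : ℝ)).mul he
        refine h2.congr_deriv ?_
        have : (Nat.factorial M : ℝ) ≠ 0 := by positivity
        rw [Nat.factorial_succ]
        push_cast
        field_simp
      have h3 := ih.sub h1
      refine (h3.congr_deriv ?_).congr_of_eventuallyEq (Filter.Eventually.of_forall ?_)
      · ring
      · intro t
        simp only [Pi.sub_apply]
        rw [Finset.sum_range_succ _ (M + 1)]
        ring
  have h := intervalIntegral.integral_eq_sub_of_hasDerivAt (a := 0) (b := t)
    (fun u _ => hd M u) (Continuous.intervalIntegrable (by fun_prop) _ _)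
  unfold lowGamma
  rw [Nat.add_sub_cancel, ← intervalIntegral.integral_div, h]
  have h0 : ∑ n ∈ Finset.range (M + 1), (0:ℝ) ^ n / (Nat.factorial n : ℝ) * Real.exp (-0) = 1 := by
    rw [Finset.sum_range_succ']
    simp
  rw [h0]
  ring

lemma integrableOn_term (c b A : ℝ) (hc : 0 < c) (hb : 0 < b) (hA : 0 < A) (j n : ℕ) :
    IntegrableOn (fun y : ℝ => ((y ^ n)⁻¹ * Real.exp (-A / y)) * (y ^ j * Real.exp (-y / b)))
      (Set.Ioi c) := by
  have h1 : IntegrableOn (fun y : ℝ => y ^ j * Real.exp (-y / b)) (Set.Ioi c) := by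
    have h := integrableOn_rpow_mul_exp_neg_mul_rpow (p := 1) (s := (j : ℝ)) (b := b⁻¹)
      (by have : (0:ℝ) ≤ j := j.cast_nonneg
          linarith) (by norm_num) (by positivity)
    refine (h.mono_set (Set.Ioi_subset_Ioi hc.le)).congr_fun ?_ measurableSet_Ioi
    intro y hy
    simp only [Real.rpow_natCast, Real.rpow_one]
    congr 2
    field_simp
  refine Integrable.bdd_mul (c := (c ^ n)⁻¹) h1 (Measurable.aestronglyMeasurable (by fun_prop)) ?_
  filter_upwards [ae_restrict_mem measurableSet_Ioi] with y hy
  have hy : c < y := hy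
  have hy0 : 0 < y := hc.trans hy
  rw [Real.norm_of_nonneg (by positivity)]
  have e1 : Real.exp (-A / y) ≤ 1 := by
    rw [Real.exp_le_one_iff, neg_div]
    have : 0 < A / y := by positivity
    linarith
  have e2 : (y ^ n)⁻¹ ≤ (c ^ n)⁻¹ := by gcongr
  calc _ ≤ (y ^ n)⁻¹ * 1 := by gcongr
    _ ≤ _ := by simpa using e2

lemma integral_term (c b A : ℝ) (hc : 0 < c) (hb : 0 < b) (j n : ℕ) :
    ∫ y in Set.Ioi c, ((y ^ n)⁻¹ * Real.exp (-A / y)) * (y ^ j * Real.exp (-y / b))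
      = b ^ ((j : ℤ) - n + 1) * extGamma (-(n : ℝ) + j + 1) (c / b) (A / b) := by
  have h := integral_comp_mul_left_Ioi
    (fun y : ℝ => ((y ^ n)⁻¹ * Real.exp (-A / y)) * (y ^ j * Real.exp (-y / b))) (c / b) hb
  rw [mul_div_cancel₀ c hb.ne', smul_eq_mul] at h
  rw [eq_inv_mul_iff_mul_eq₀ hb.ne'] at h
  rw [← h, extGamma, zpow_add_one₀ hb.ne', mul_comm _ b, mul_assoc]
  congr 1
  rw [← integral_const_mul]
  refine setIntegral_congr_fun measurableSet_Ioi ?_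
  intro t ht
  have ht0 : 0 < t := lt_trans (by positivity) ht
  have e1 : t ^ (-(n : ℝ) + j + 1 - 1) = (t ^ n)⁻¹ * t ^ j := by
    rw [add_sub_cancel_right, Real.rpow_add ht0, Real.rpow_neg ht0.le, Real.rpow_natCast,
      Real.rpow_natCast]
  have e2 : Real.exp (-t - A / b / t) = Real.exp (-A / (b * t)) * Real.exp (-(b * t) / b) := by
    rw [← Real.exp_add]
    congr 1
    field_simp
    ring
  simp only
  rw [e1, e2, zpow_sub₀ hb.ne', zpow_natCast, zpow_natCast, mul_pow, mul_pow]
  field_simp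

/-- Theorem 1 of the paper: the unconditional CDF of the energy test statistic under `L`
active primary users over Nakagami-m fading.  If the conditioning variance has the mixed
Gamma density `f` on `[c, ∞)` built from coefficients `Ξ i k`, shapes `a i` and scales
`b i`, and `∫_c^∞ f = 1`, then for every `x > 0` the unconditional CDF
`∫_c^∞ γ(N, N x / (2 y)) / (N-1)! · f y dy` equals the stated quadruple-sum closed form
in terms of the extended incomplete Gamma function. -/
theorem energy_statistic_cdf_multiPU (N L : ℕ) (hN : 0 < N) (hL : 0 < L)
    (c : ℝ) (hc : 0 < c) (a : Fin L → ℕ) (ha : ∀ i, 0 < a i)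
    (b : Fin L → ℝ) (hb : ∀ i, 0 < b i) (Ξ : Fin L → ℕ → ℝ)
    (f : ℝ → ℝ)
    (hf : ∀ y, f y = ∑ i : Fin L, ∑ k ∈ Finset.Icc 1 (a i),
        Ξ i k * (y - c) ^ (k - 1) * Real.exp (-(y - c) / b i)
          / ((b i) ^ k * (Nat.factorial (k - 1) : ℝ)))
    (hf1 : (∫ y in Set.Ioi c, f y) = 1) :
    ∀ x : ℝ, 0 < x →
      (∫ y in Set.Ioi c, (lowGamma N ((N : ℝ) * x / (2 * y))
            / (Nat.factorial (N - 1) : ℝ)) * f y)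
        = 1 - ∑ n ∈ Finset.range N, ∑ i : Fin L, ∑ k ∈ Finset.Icc 1 (a i),
            ∑ j ∈ Finset.range k,
              ((-c) ^ (k - 1 - j) * Ξ i k
                  / ((Nat.factorial n : ℝ) * (b i) ^ ((k : ℤ) + n - j - 1)
                    * (Nat.factorial (k - 1) : ℝ)))
                * ((k - 1).choose j : ℝ) * ((N : ℝ) * x / 2) ^ n
                * Real.exp (c / b i)
                * extGamma (-(n : ℝ) + j + 1) (c / b i) ((N : ℝ) * x / (2 * b i)) := by
  intro x hx
  obtain ⟨M, rfl⟩ : ∃ M, N = M + 1 := ⟨N - 1, by omega⟩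
  have hA : 0 < ((M + 1 : ℕ) : ℝ) * x / 2 := by positivity
  set A : ℝ := ((M + 1 : ℕ) : ℝ) * x / 2 with hAdef
  have hfi : IntegrableOn f (Set.Ioi c) := by
    by_contra h
    rw [integral_undef h] at hf1
    exact zero_ne_one hf1
  let C : ℕ → Fin L → ℕ → ℕ → ℝ := fun n i k j =>
    (-c) ^ (k - 1 - j) * Ξ i k * ((k - 1).choose j : ℝ) * A ^ n * Real.exp (c / b i)
      / ((Nat.factorial n : ℝ) * (b i) ^ k * (Nat.factorial (k - 1) : ℝ))
  let g : ℕ → Fin L → ℕ → ℝ → ℝ := fun n i j y =>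
    ((y ^ n)⁻¹ * Real.exp (-A / y)) * (y ^ j * Real.exp (-y / b i))
  have hgi : ∀ n i k j, Integrable (fun y => C n i k j * g n i j y)
      (volume.restrict (Set.Ioi c)) := fun n i k j =>
    (integrableOn_term c (b i) A hc (hb i) hA j n).const_mul _
  have key : ∀ y ∈ Set.Ioi c, (lowGamma (M + 1) (((M + 1 : ℕ) : ℝ) * x / (2 * y))
            / (Nat.factorial (M + 1 - 1) : ℝ)) * f y
      = f y - ∑ n ∈ Finset.range (M + 1), ∑ i : Fin L, ∑ k ∈ Finset.Icc 1 (a i),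
            ∑ j ∈ Finset.range k, C n i k j * g n i j y := by
    intro y hy
    have hy0 : 0 < y := hc.trans hy
    have e0 : ((M + 1 : ℕ) : ℝ) * x / (2 * y) = A / y := by
      rw [hAdef]; field_simp
    rw [Nat.add_sub_cancel, lowGamma_succ_eq, e0, sub_mul, one_mul, Finset.sum_mul]
    congr 1
    refine Finset.sum_congr rfl fun n _ => ?_
    rw [hf y, Finset.mul_sum]
    refine Finset.sum_congr rfl fun i _ => ?_
    rw [Finset.mul_sum]
    refine Finset.sum_congr rfl fun k hk => ?_
    have hk1 : 1 ≤ k := (Finset.mem_Icc.1 hk).1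
    have e1 : (y - c) ^ (k - 1)
        = ∑ j ∈ Finset.range k, y ^ j * (-c) ^ (k - 1 - j) * ((k - 1).choose j : ℝ) := by
      rw [sub_eq_add_neg, add_pow, Nat.sub_add_cancel hk1]
    have e2 : Real.exp (-(y - c) / b i) = Real.exp (c / b i) * Real.exp (-y / b i) := by
      rw [← Real.exp_add]; congr 1; ring
    rw [e1, e2, Finset.mul_sum, Finset.sum_mul, Finset.sum_div, Finset.mul_sum]
    refine Finset.sum_congr rfl fun j _ => ?_
    simp only [C, g]
    have := hb i
    rw [div_pow, neg_div]
    field_simp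
  rw [setIntegral_congr_fun measurableSet_Ioi key, integral_sub hfi, hf1]
  · congr 1
    rw [integral_finsetSum]
    refine Finset.sum_congr rfl fun n _ => ?_
    rw [integral_finsetSum]
    refine Finset.sum_congr rfl fun i _ => ?_
    rw [integral_finsetSum]
    refine Finset.sum_congr rfl fun k hk => ?_
    rw [integral_finsetSum]
    refine Finset.sum_congr rfl fun j _ => ?_
    · rw [integral_const_mul]
      simp only [g]
      rw [integral_term c (b i) A hc (hb i)]
      have hbi := hb i
      have e3 : ((M + 1 : ℕ) : ℝ) * x / (2 * b i) = A / b i := by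
        rw [hAdef]; field_simp
      have e4 : (b i) ^ ((j : ℤ) - n + 1) / (b i) ^ k = ((b i) ^ ((k : ℤ) + n - j - 1))⁻¹ := by
        rw [← zpow_natCast (b i) k, ← zpow_sub₀ hbi.ne', ← zpow_neg]
        congr 1
        ring
      rw [e3]
      simp only [C]
      have e5 : ∀ P n k q z E : ℝ, P / (n * k * q) * (z * E) = P * (z / k) * E / (n * q) := by
        intros; simp only [div_eq_mul_inv, mul_inv]; ring
      rw [e5, e4]
      simp only [div_eq_mul_inv, mul_inv]
      ring
    · exact fun j _ => hgi n i k j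
    · exact fun k _ => integrable_finsetSum _ fun j _ => hgi n i k j
    · exact fun i _ => integrable_finsetSum _ fun k _ => integrable_finsetSum _ fun j _ =>
        hgi n i k j
    · exact fun n _ => integrable_finsetSum _ fun i _ => integrable_finsetSum _ fun k _ =>
        integrable_finsetSum _ fun j _ => hgi n i k j
  · exact integrable_finsetSum _ fun n _ => integrable_finsetSum _ fun i _ =>
      integrable_finsetSum _ fun k _ => integrable_finsetSum _ fun j _ => hgi n i k j
end
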